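/- arXiv:0706.2608 — 2 statements merged into one kernel-verified Lean document; each statement's English description precedes it below -/
import Mathlib

section
/- Let k be a field, n ≥ 1, and A_n = k[x_1,…,x_n]. Let M be an A_n-module such that the only element m ∈ M with x_j·m = 0 for every j = 1,…,n is m = 0. Then Tor_n^{A_n}(M, k) = 0, where k carries the A_n-module structure in which every variable acts as zero. -/
/-!
The proof dualises the problem to `Ext`, where the hypothesis on `M` becomes a surjectivity
statement that can be combined with the finite projective dimension of `k`.

Write `R = Aₙ` and let `L = Hom_ℤ(M, ℚ/ℤ)` be the character module of `M`. For a projective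
resolution `P` of `k`, characters of `M ⊗ P_i` are the same as linear maps `P_i → L`, and
characters separate points; hence `Ext^n_R(k, L) = 0` forces `M ⊗ P` to be exact in degree `n`
(`exact_lTensor_of_factors`, `isZero_tor_of_ext`).

The hypothesis on `M` says that `m ↦ (x_j m)_j` is an injection `M → Mⁿ`. Dualising it, the map
`f : Lⁿ → L`, `(l_j) ↦ ∑ x_j l_j`, is surjective (`surjective_smul_sum`). The Koszul-type exact
sequences `0 → R/I → R/I → R/(I + (x)) → 0` show that `k` has projective dimension at most `n`
(`hasProjectiveDimensionLT_resField`), so `Ext^{n+1}_R(k, ker f) = 0` and therefore `f` induces a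
surjection `Ext^n_R(k, Lⁿ) → Ext^n_R(k, L)`. But each `x_j` acts as zero on `k`, hence on
`Ext^n_R(k, -)`, so this surjection is the zero map and `Ext^n_R(k, L) = 0`
(`subsingleton_ext_of_surjective`).
-/

open CategoryTheory MvPolynomial

/-- `k` as a module over `Aₙ = k[x_1,…,x_n]`, with every variable acting as zero
(i.e. the module `Aₙ/(x_1,…,x_n)`). -/
def ResField (k : Type) [Field k] : Type := k

noncomputable instance (k : Type) [Field k] : AddCommGroup (ResField k) :=
  inferInstanceAs (AddCommGroup k)

noncomputable instance (k : Type) [Field k] (n : ℕ) :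
    Module (MvPolynomial (Fin n) k) (ResField k) :=
  Module.compHom k (constantCoeff : MvPolynomial (Fin n) k →+* k)

open Abelian

/-- If multiplication by `x` is injective on `R ⧸ I`, then passing from `R ⧸ I` to
`R ⧸ (I + (x))` raises the projective dimension by at most one. -/
lemma hasProjectiveDimensionLT_quotient_sup {R : Type} [CommRing R] (I J : Ideal R) (x : R)
    (hJ : J = I ⊔ Ideal.span {x}) (hx : ∀ r : R, x * r ∈ I → r ∈ I) (m : ℕ)
    (h : HasProjectiveDimensionLT (ModuleCat.of R (R ⧸ I)) m) :
    HasProjectiveDimensionLT (ModuleCat.of R (R ⧸ J)) (m + 1) := by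
  have hIJ : I ≤ J := hJ ▸ le_sup_left
  have hxJ : x ∈ J := hJ ▸ Ideal.mem_sup_right (Ideal.mem_span_singleton_self x)
  let f : (R ⧸ I) →ₗ[R] (R ⧸ I) := LinearMap.lsmul R (R ⧸ I) x
  let g : (R ⧸ I) →ₗ[R] (R ⧸ J) := Submodule.factor hIJ
  have hf (r : R) : f (Submodule.Quotient.mk r) = Submodule.Quotient.mk (x * r) := rfl
  have hg (r : R) : g (Submodule.Quotient.mk r) = Submodule.Quotient.mk r := rfl
  have hfg : g ∘ₗ f = 0 := by
    ext
    change g (f (Submodule.Quotient.mk 1)) = 0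
    rw [hf, hg, Submodule.Quotient.mk_eq_zero, mul_one]
    exact hxJ
  let S : ShortComplex (ModuleCat R) := ModuleCat.shortComplexOfCompEqZero f g hfg
  have hS : S.ShortExact :=
    { exact := by
        rw [ShortComplex.moduleCat_exact_iff]
        intro (y : R ⧸ I) (hy : g y = 0)
        obtain ⟨r, rfl⟩ := Submodule.Quotient.mk_surjective I y
        rw [hg, Submodule.Quotient.mk_eq_zero, hJ, Submodule.mem_sup] at hy
        obtain ⟨a, ha, b, hb, rfl⟩ := hy
        obtain ⟨c, rfl⟩ := Ideal.mem_span_singleton'.1 hb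
        refine ⟨(Submodule.Quotient.mk c : R ⧸ I), ?_⟩
        change f (Submodule.Quotient.mk c) = _
        rw [hf, Submodule.Quotient.eq]
        have : x * c - (a + c * x) = -a := by ring
        rw [this]
        exact I.neg_mem ha
      mono_f := by
        rw [ModuleCat.mono_iff_injective]
        refine (injective_iff_map_eq_zero f).2 fun y hy ↦ ?_
        obtain ⟨r, rfl⟩ := Submodule.Quotient.mk_surjective I y
        rw [hf, Submodule.Quotient.mk_eq_zero] at hy
        exact (Submodule.Quotient.mk_eq_zero I).2 (hx r hy)
      epi_g := by
        rw [ModuleCat.epi_iff_surjective]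
        exact Submodule.factor_surjective hIJ }
  have h' : HasProjectiveDimensionLT S.X₁ m := h
  exact hS.hasProjectiveDimensionLT_X₃ m h' (hasProjectiveDimensionLT_of_ge S.X₂ m (m + 1) (by lia))

/-- The variable `x_i` is a nonzerodivisor modulo any set of other variables. -/
lemma mem_span_X_of_X_mul_mem {k σ : Type} [Field k] (s : Set σ) (i : σ) (hi : i ∉ s)
    (p : MvPolynomial σ k)
    (hp : X i * p ∈ Ideal.span (X '' s : Set (MvPolynomial σ k))) :
    p ∈ Ideal.span (X '' s : Set (MvPolynomial σ k)) := by
  classical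
  rw [mem_ideal_span_X_image] at hp ⊢
  intro m hm
  obtain ⟨j, hj, hmj⟩ := hp (Finsupp.single i 1 + m) (by
    rwa [mem_support_iff, coeff_X_mul, ← mem_support_iff])
  refine ⟨j, hj, ?_⟩
  have : i ≠ j := fun h ↦ hi (h ▸ hj)
  simpa [Finsupp.single_apply, this] using hmj

lemma hasProjectiveDimensionLT_quotient_span_X (k : Type) [Field k] (n j : ℕ) (hj : j ≤ n) :
    HasProjectiveDimensionLT (ModuleCat.of (MvPolynomial (Fin n) k) (MvPolynomial (Fin n) k ⧸
      Ideal.span (X '' {i : Fin n | i.val < j} : Set (MvPolynomial (Fin n) k)))) (j + 1) := by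
  induction j with
  | zero =>
    have h0 : Ideal.span (X '' {i : Fin n | i.val < 0} : Set (MvPolynomial (Fin n) k)) = ⊥ := by
      simp
    have : Projective (ModuleCat.of (MvPolynomial (Fin n) k) (MvPolynomial (Fin n) k)) :=
      ModuleCat.projective_of_free (Module.Basis.singleton PUnit.{1} _)
    exact hasProjectiveDimensionLT_of_iso
      (Submodule.quotEquivOfEqBot _ h0).symm.toModuleIso 1
  | succ j ih =>
    refine hasProjectiveDimensionLT_quotient_sup _ _ (X ⟨j, hj⟩) ?_
      (mem_span_X_of_X_mul_mem _ _ (by simp)) _ (ih (by lia))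
    have : {i : Fin n | i.val < j + 1} = {i : Fin n | i.val < j} ∪ {⟨j, hj⟩} := by
      ext i
      simp [Fin.ext_iff]
      lia
    rw [this, Set.image_union, Ideal.span_union, Set.image_singleton]

lemma X_smul_resField {k : Type} [Field k] {n : ℕ} (j : Fin n) (a : ResField k) :
    (X j : MvPolynomial (Fin n) k) • a = 0 :=
  have h (b : k) : constantCoeff (X j : MvPolynomial (Fin n) k) * b = 0 := by simp
  h a

/-- The `Aₙ`-linear map `Aₙ → k` taking the constant coefficient. -/
noncomputable def toResField (k : Type) [Field k] (n : ℕ) :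
    MvPolynomial (Fin n) k →ₗ[MvPolynomial (Fin n) k] ResField k where
  toFun p := (constantCoeff p : k)
  map_add' p q := map_add (constantCoeff : MvPolynomial (Fin n) k →+* k) p q
  map_smul' p q := map_mul (constantCoeff : MvPolynomial (Fin n) k →+* k) p q

lemma ker_toResField (k : Type) [Field k] (n : ℕ) :
    Ideal.span (X '' {i : Fin n | i.val < n} : Set (MvPolynomial (Fin n) k)) =
      LinearMap.ker (toResField k n) := by
  ext p
  have hker : p ∈ LinearMap.ker (toResField k n) ↔ coeff 0 p = 0 := Iff.rfl
  rw [mem_ideal_span_X_image, hker]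
  constructor
  · intro h
    by_contra h0
    obtain ⟨i, -, hi⟩ := h 0 (mem_support_iff.2 h0)
    exact hi rfl
  · intro h m hm
    by_contra! h'
    have hm0 : m = 0 := Finsupp.ext fun i ↦ h' i i.isLt
    exact mem_support_iff.1 hm (hm0 ▸ h)

/-- `k` is the quotient of `Aₙ` by the ideal generated by all the variables. -/
noncomputable def quotientEquivResField (k : Type) [Field k] (n : ℕ) :
    (MvPolynomial (Fin n) k ⧸
      Ideal.span (X '' {i : Fin n | i.val < n} : Set (MvPolynomial (Fin n) k)))
      ≃ₗ[MvPolynomial (Fin n) k] ResField k :=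
  (Submodule.quotEquivOfEq _ _ (ker_toResField k n)).trans
    ((toResField k n).quotKerEquivOfSurjective
      fun a : k ↦ ⟨C a, constantCoeff_C (Fin n) a⟩)

lemma hasProjectiveDimensionLT_resField (k : Type) [Field k] (n : ℕ) :
    HasProjectiveDimensionLT
      (ModuleCat.of (MvPolynomial (Fin n) k) (ResField k)) (n + 1) :=
  have := hasProjectiveDimensionLT_quotient_span_X k n n le_rfl
  hasProjectiveDimensionLT_of_iso (quotientEquivResField k n).toModuleIso (n + 1)

/-- The dual of the injectivity of `m ↦ (x_j m)_j`. -/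
lemma surjective_smul_sum {R : Type} [CommRing R] {n : ℕ} (x : Fin n → R)
    (M : Type) [AddCommGroup M] [Module R M] (hM : ∀ m : M, (∀ j, x j • m = 0) → m = 0) :
    Function.Surjective
      (∑ j, x j • LinearMap.proj j : (Fin n → CharacterModule M) →ₗ[R] CharacterModule M) := by
  classical
  let u : M →ₗ[R] (Fin n → M) := LinearMap.pi fun j ↦ x j • LinearMap.id
  have hu : Function.Injective u :=
    (injective_iff_map_eq_zero u).2 fun m hm ↦ hM m fun j ↦ congrFun hm j
  intro c
  -- Extend `c` along `u` to a character of `Mⁿ`, and take its restrictions to the factors.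
  obtain ⟨c', rfl⟩ := CharacterModule.dual_surjective_of_injective u hu c
  refine ⟨fun j ↦ CharacterModule.dual (LinearMap.single R (fun _ ↦ M) j) c', ?_⟩
  ext m
  have h1 : u m = ∑ j, Pi.single j (x j • m) := (Finset.univ_sum_single (u m)).symm
  have h2 : CharacterModule.dual u c' m = ∑ j, c' (Pi.single j (x j • m)) := by
    change c' (u m) = _
    rw [h1, map_sum]
  rw [h2]
  simp only [LinearMap.sum_apply, LinearMap.smul_apply, LinearMap.proj_apply]
  refine Eq.trans (b := ∑ j, (x j • CharacterModule.dual (LinearMap.single R (fun _ ↦ M) j) c') m)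
    ?_ rfl
  exact map_sum (AddMonoidHom.eval m) _ _

/-- If `N` is killed by the `x_j`, has projective dimension at most `n`, and `∑ x_j : Lʳ → L` is
surjective, then `Ext^n(N, L) = 0`: the top `Ext` is right exact, and each `x_j` kills it. -/
lemma subsingleton_ext_of_surjective {R : Type} [CommRing R] {r : ℕ} (x : Fin r → R)
    (N : ModuleCat.{0} R) (hN : ∀ j, ∀ a : N, x j • a = 0) (n : ℕ)
    [HasProjectiveDimensionLT N (n + 1)] (L : Type) [AddCommGroup L] [Module R L]
    (hL : Function.Surjective (∑ j, x j • LinearMap.proj j : (Fin r → L) →ₗ[R] L)) :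
    Subsingleton (Ext N (ModuleCat.of R L) n) := by
  have hzero (j) (Y : ModuleCat.{0} R) (e : Ext N Y n) : x j • e = 0 := by
    have h0 : x j • 𝟙 N = 0 := by
      ext a
      exact hN j a
    rw [← Ext.mk₀_id_comp e, ← Ext.smul_comp, ← Ext.mk₀_smul, h0, Ext.mk₀_zero, Ext.zero_comp]
  refine subsingleton_of_forall_eq 0 fun e ↦ ?_
  have hS := LinearMap.shortExact_shortComplexKer hL
  obtain ⟨e', rfl⟩ := Ext.covariant_sequence_exact₃ N hS e rfl
    (Ext.eq_zero_of_hasProjectiveDimensionLT _ (n + 1) le_rfl)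
  have hg : (LinearMap.shortComplexKer
      (∑ j, x j • LinearMap.proj j : (Fin r → L) →ₗ[R] L)).g =
      ∑ j, x j • ModuleCat.ofHom (LinearMap.proj j : (Fin r → L) →ₗ[R] L) := by
    exact ModuleCat.hom_ext (by rw [ModuleCat.hom_sum]; rfl)
  rw [hg, Ext.mk₀_sum, Ext.comp_sum]
  refine Finset.sum_eq_zero fun j _ ↦ ?_
  rw [Ext.mk₀_smul, Ext.comp_smul, hzero]

open TensorProduct in
/-- Exactness of `M ⊗ A → M ⊗ B → M ⊗ C` can be tested on maps into the character module of
`M`. -/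
lemma exact_lTensor_of_factors {R : Type} [CommRing R] (M : Type) {A B C : Type}
    [AddCommGroup M] [Module R M] [AddCommGroup A] [Module R A] [AddCommGroup B] [Module R B]
    [AddCommGroup C] [Module R C] (f : A →ₗ[R] B) (g : B →ₗ[R] C)
    (H : ∀ φ : B →ₗ[R] CharacterModule M, φ ∘ₗ f = 0 →
      ∃ ψ : C →ₗ[R] CharacterModule M, ψ ∘ₗ g = φ)
    (z : M ⊗[R] B) (hz : g.lTensor M z = 0) : ∃ y, f.lTensor M y = z := by
  let I : Submodule R (M ⊗[R] B) := LinearMap.range (f.lTensor M)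
  suffices h : I.mkQ z = 0 from (Submodule.Quotient.mk_eq_zero I).1 h
  refine CharacterModule.eq_zero_of_character_apply fun c ↦ ?_
  let c' : CharacterModule (B ⊗[R] M) :=
    CharacterModule.dual (I.mkQ ∘ₗ (TensorProduct.comm R B M).toLinearMap) c
  have hc' (b : B) (m : M) : CharacterModule.curry (R := R) c' b m = c (I.mkQ (m ⊗ₜ b)) := rfl
  obtain ⟨ψ, hψ⟩ := H (CharacterModule.curry c') (by
    ext a m
    change c (I.mkQ (m ⊗ₜ f a)) = 0
    have h0 : I.mkQ (m ⊗ₜ f a) = 0 := (Submodule.Quotient.mk_eq_zero I).2 ⟨m ⊗ₜ a, rfl⟩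
    rw [h0, map_zero])
  let d : CharacterModule (M ⊗[R] C) :=
    CharacterModule.dual (TensorProduct.comm R M C).toLinearMap (CharacterModule.uncurry ψ)
  have key (w : M ⊗[R] B) : c (I.mkQ w) = d (g.lTensor M w) := by
    induction w with
    | zero => simp
    | add a b ha hb => simp only [map_add, ha, hb]
    | tmul m b =>
      rw [← hc', ← hψ]
      rfl
  rw [key, hz, map_zero]

/-- `Ext^n(N, M⋆) = 0` implies `Tor_n(M, N) = 0` for `n ≥ 1`. -/
lemma isZero_tor_of_ext {R : Type} [CommRing R] (M : Type) [AddCommGroup M] [Module R M]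
    (N : ModuleCat.{0} R) (m : ℕ)
    (h : Subsingleton (Ext N (ModuleCat.of R (CharacterModule M)) (m + 1))) :
    Limits.IsZero (((Tor (ModuleCat R) (m + 1)).obj (ModuleCat.of R M)).obj N) := by
  let P := projectiveResolution N
  let F := (MonoidalCategory.tensoringLeft (ModuleCat R)).obj (ModuleCat.of R M)
  refine Limits.IsZero.of_iso ?_ (P.isoLeftDerivedObj F (m + 1))
  refine HomologicalComplex.ExactAt.isZero_homology ?_
  rw [HomologicalComplex.exactAt_iff' _ (m + 2) (m + 1) m (by simp) (by simp),
    ShortComplex.moduleCat_exact_iff]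
  refine exact_lTensor_of_factors M (P.complex.d (m + 2) (m + 1)).hom
    (P.complex.d (m + 1) m).hom fun φ hφ ↦ ?_
  obtain ⟨ψ, hψ⟩ := (P.extMk_eq_zero_iff (Y := ModuleCat.of R (CharacterModule M))
    (ModuleCat.ofHom φ) (m + 2) rfl (ModuleCat.hom_ext hφ) m rfl).1 (Subsingleton.elim _ _)
  exact ⟨ψ.hom, congrArg ModuleCat.Hom.hom hψ⟩

/-- If `M` is an `Aₙ = k[x_1,…,x_n]`-module in which the only element annihilated by
all the variables `x_1,…,x_n` is `0`, then `Tor_n^{Aₙ}(M, k) = 0`, where the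
variables act as zero on `k`. -/
theorem tor_n_isZero (k : Type) [Field k] (n : ℕ) (hn : 1 ≤ n)
    (M : Type) [AddCommGroup M] [Module (MvPolynomial (Fin n) k) M]
    (hM : ∀ m : M, (∀ j : Fin n, (X j : MvPolynomial (Fin n) k) • m = 0) → m = 0) :
    Limits.IsZero (((Tor (ModuleCat (MvPolynomial (Fin n) k)) n).obj
        (ModuleCat.of (MvPolynomial (Fin n) k) M)).obj
        (ModuleCat.of (MvPolynomial (Fin n) k) (ResField k))) := by
  have := hasProjectiveDimensionLT_resField k n
  have hExt := subsingleton_ext_of_surjective (X : Fin n → MvPolynomial (Fin n) k)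
    (ModuleCat.of (MvPolynomial (Fin n) k) (ResField k))
    (fun j (a : ResField k) ↦ X_smul_resField j a) n (CharacterModule M)
    (surjective_smul_sum _ M hM)
  obtain ⟨m, rfl⟩ := Nat.exists_eq_add_of_le' hn
  exact isZero_tor_of_ext M _ m hExt
end

section
/- Let k be a field, n ≥ 1, and A_n = k[x_1,…,x_n]. For every A_n-module M and every integer i > n, Tor_i^{A_n}(M, k) = 0, where k carries the A_n-module structure in which every variable acts as zero. Consequently, the multisets ξ_i(M) of degrees of generators of Tor_i^{A_n}(M,k) are empty for i > n. -/
/-!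
The `A`-module `k = A ⧸ (x₁, …, xₙ)` has projective dimension at most `n`, and the left derived
functors of any additive functor vanish on an object above its projective dimension.

The first fact holds because the variables form a regular sequence: adjoining one more variable
`x` to an ideal `J` generated by other variables gives a short exact sequence
`0 ⟶ A ⧸ J ⟶ A ⧸ J ⟶ A ⧸ (J + (x)) ⟶ 0`, which raises the projective dimension by at most one
(`hasProjectiveDimensionLE_quotient_sup`, `hasProjectiveDimensionLE_resField`). Nonzerodivisibility
is read off from monomials, since ideals of variables are monomial ideals.

For the second fact, each syzygy in a projective resolution lowers the bound on the projective
dimension by one, so from the `n`-th on they are all projective. The resolution is therefore split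
exact in degrees above `n`, and remains exact after applying the functor
(`isZero_leftDerived_of_hasProjectiveDimensionLE`). As `Tor` is derived in its second variable,
taking the functor `M ⊗ -` and the object `k` gives the vanishing of `Tor`.
-/


open CategoryTheory MvPolynomial

namespace TorVanishing

open CategoryTheory.Limits

/-- The short exact sequence `0 ⟶ Qᵢ₊₁ ⟶ Pᵢ ⟶ Qᵢ ⟶ 0` of syzygies of a projective resolution
`P`, where `Qᵢ = coker (Pᵢ₊₁ ⟶ Pᵢ)` is the `i`-th syzygy. With this convention `Q₀` is the
resolved object, so that no special treatment is needed in degree zero. -/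
noncomputable def syzygySeq {C : Type*} [Category* C] [Abelian C] {X : C}
    (P : ProjectiveResolution X) (i : ℕ) : ShortComplex C :=
  ShortComplex.mk
    (cokernel.desc (P.complex.d (i + 2) (i + 1)) (P.complex.d (i + 1) i) (by simp))
    (cokernel.π (P.complex.d (i + 1) i)) (by
      rw [← cancel_epi (cokernel.π (P.complex.d (i + 2) (i + 1)))]; simp)

lemma syzygySeq_shortExact {C : Type*} [Category* C] [Abelian C] {X : C}
    (P : ProjectiveResolution X) (i : ℕ) : (syzygySeq P i).ShortExact where
  exact := by
    let T : ShortComplex C := ShortComplex.mk (P.complex.d (i + 1) i)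
      (cokernel.π (P.complex.d (i + 1) i)) (by simp)
    have hT : T.Exact := T.exact_of_g_is_cokernel (cokernelIsCokernel _)
    let φ : T ⟶ syzygySeq P i :=
      { τ₁ := cokernel.π (P.complex.d (i + 2) (i + 1))
        τ₂ := 𝟙 _
        τ₃ := 𝟙 _
        comm₁₂ := by simp [T, syzygySeq]
        comm₂₃ := by simp [T, syzygySeq] }
    have : Epi φ.τ₁ := inferInstanceAs (Epi (cokernel.π _))
    have : IsIso φ.τ₂ := inferInstanceAs (IsIso (𝟙 _))
    have : Mono φ.τ₃ := inferInstanceAs (Mono (𝟙 _))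
    exact (ShortComplex.exact_iff_of_epi_of_isIso_of_mono φ).1 hT
  mono_f := (P.exact_succ i).mono_cokernelDesc
  epi_g := by dsimp [syzygySeq]; infer_instance

lemma hasProjectiveDimensionLE_syzygy {C : Type*} [Category* C] [Abelian C] {X : C}
    (P : ProjectiveResolution X) {n : ℕ} (hX : HasProjectiveDimensionLE X n) (i : ℕ) :
    HasProjectiveDimensionLE (cokernel (P.complex.d (i + 1) i)) (n - i) := by
  induction i with
  | zero =>
    have : HasProjectiveDimensionLT P.cokernelCofork.pt (n - 0 + 1) := hX
    exact hasProjectiveDimensionLT_of_iso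
      (P.isColimitCokernelCofork.coconePointUniqueUpToIso (cokernelIsCokernel _)) _
  | succ i ih =>
    have : Projective (syzygySeq P i).X₂ := P.projective i
    refine (syzygySeq_shortExact P i).hasProjectiveDimensionLT_X₁ (n - (i + 1) + 1)
      inferInstance ?_
    have : HasProjectiveDimensionLT (syzygySeq P i).X₃ (n - i + 1) := ih
    exact hasProjectiveDimensionLT_of_ge _ (n - i + 1) _ (by omega)

lemma exact_of_contraction {C : Type*} [Category* C] [Abelian C] (S : ShortComplex C)
    (l : S.X₂ ⟶ S.X₁) (h : S.X₃ ⟶ S.X₂) (hlh : l ≫ S.f + S.g ≫ h = 𝟙 S.X₂) : S.Exact := by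
  rw [ShortComplex.exact_iff_exact_up_to_refinements]
  intro A x hx
  refine ⟨A, 𝟙 A, inferInstance, x ≫ l, ?_⟩
  have := congrArg (fun u => x ≫ u) hlh
  rw [Preadditive.comp_add, reassoc_of% hx, zero_comp, add_zero, Category.comp_id] at this
  rw [Category.id_comp, Category.assoc, this]

/-- Left derived functors vanish above the projective dimension. In degree `j + 1 > n` the syzygy
sequences around `Pⱼ` and `Pⱼ₊₁` split, so the identity of `Pⱼ₊₁` has the form
`l ≫ d + d ≫ h`. Any additive functor preserves such an identity, which forces exactness. -/
lemma isZero_leftDerived_of_hasProjectiveDimensionLE {C D : Type*} [Category* C] [Category* D]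
    [Abelian C] [HasProjectiveResolutions C] [Abelian D] (F : C ⥤ D) [F.Additive] {X : C}
    {n : ℕ} (hX : HasProjectiveDimensionLE X n) (i : ℕ) (hi : n < i) :
    IsZero ((F.leftDerived i).obj X) := by
  obtain ⟨j, rfl⟩ : ∃ j, i = j + 1 := ⟨i - 1, by omega⟩
  let P := projectiveResolution X
  have proj (l : ℕ) (hl : n ≤ l) : Projective (cokernel (P.complex.d (l + 1) l)) := by
    rw [projective_iff_hasProjectiveDimensionLE_zero]
    simpa [Nat.sub_eq_zero_of_le hl] using hasProjectiveDimensionLE_syzygy P hX l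
  have : Projective (syzygySeq P j).X₃ := proj j (by omega)
  have : Projective (cokernel (P.complex.d (j + 2) (j + 1))) := proj (j + 1) (by omega)
  let r : P.complex.X j ⟶ cokernel (P.complex.d (j + 2) (j + 1)) :=
    (syzygySeq_shortExact P j).splittingOfProjective.r
  have hr : cokernel.desc (P.complex.d (j + 2) (j + 1)) (P.complex.d (j + 1) j) (by simp) ≫ r
      = 𝟙 _ := (syzygySeq_shortExact P j).splittingOfProjective.f_r
  let s := Projective.factorThru (𝟙 _) (cokernel.π (P.complex.d (j + 2) (j + 1)))
  have hs : s ≫ cokernel.π (P.complex.d (j + 2) (j + 1)) = 𝟙 _ := Projective.factorThru_comp _ _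
  have hd : P.complex.d (j + 1) j = cokernel.π (P.complex.d (j + 2) (j + 1)) ≫
      cokernel.desc (P.complex.d (j + 2) (j + 1)) (P.complex.d (j + 1) j) (by simp) := by simp
  have hdr : P.complex.d (j + 1) j ≫ r = cokernel.π (P.complex.d (j + 2) (j + 1)) := by
    rw [hd, Category.assoc, hr, Category.comp_id]
  -- `r ≫ s` is a quasi-inverse of the differential `d`, so `𝟙 - d ≫ r ≫ s` lands in `ker d`.
  have hsd : s ≫ P.complex.d (j + 1) j =
      cokernel.desc (P.complex.d (j + 2) (j + 1)) (P.complex.d (j + 1) j) (by simp) := by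
    conv_lhs => rw [hd, reassoc_of% hs]
  have hz : (𝟙 _ - P.complex.d (j + 1) j ≫ r ≫ s) ≫ P.complex.d (j + 1) j = 0 := by
    rw [Preadditive.sub_comp, Category.assoc, Category.assoc, hsd, reassoc_of% hdr]
    simp
  have : Projective (P.complex.X (j + 1)) := P.projective _
  let l : P.complex.X (j + 1) ⟶ P.complex.X (j + 2) := (P.exact_succ j).liftFromProjective _ hz
  have hl : l ≫ P.complex.d (j + 2) (j + 1) = 𝟙 _ - P.complex.d (j + 1) j ≫ r ≫ s :=
    (P.exact_succ j).liftFromProjective_comp _ hz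
  refine IsZero.of_iso ?_ (P.isoLeftDerivedObj F (j + 1))
  refine (HomologicalComplex.exactAt_iff_isZero_homology _ _).1 ?_
  rw [HomologicalComplex.exactAt_iff' _ (j + 2) (j + 1) j (by simp) (by simp)]
  refine exact_of_contraction _ (F.map l) (F.map (r ≫ s)) ?_
  change F.map l ≫ F.map (P.complex.d (j + 2) (j + 1)) +
    F.map (P.complex.d (j + 1) j) ≫ F.map (r ≫ s) = 𝟙 (F.obj (P.complex.X (j + 1)))
  rw [← F.map_comp, ← F.map_comp, ← F.map_add, hl, sub_add_cancel, F.map_id]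

/-- A variable outside `t` is a nonzerodivisor modulo the ideal of the variables in `t`: membership
in a monomial ideal is tested on the support, and multiplying by `x_a` does not change the
exponents of the variables in `t`. -/
lemma mem_span_X_of_X_mul_mem {σ R : Type*} [CommRing R] {t : Set σ} {a : σ} (ha : a ∉ t)
    {p : MvPolynomial σ R}
    (hp : X a * p ∈ Ideal.span (X '' t : Set (MvPolynomial σ R))) :
    p ∈ Ideal.span (X '' t : Set (MvPolynomial σ R)) := by
  classical
  rw [mem_ideal_span_X_image] at hp ⊢
  intro m hm
  obtain ⟨i, hi, hmi⟩ := hp (Finsupp.single a 1 + m) (by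
    rw [mem_support_iff, coeff_X_mul]; exact mem_support_iff.1 hm)
  refine ⟨i, hi, ?_⟩
  have : a ≠ i := fun h => ha (h ▸ hi)
  simpa [Finsupp.single_apply, this] using hmi

/-- `A ⧸ I` has projective dimension at most that of `A ⧸ J` plus one, when `I = J + (x)` and `x`
is a nonzerodivisor modulo `J`: multiplication by `x` resolves `A ⧸ I` by two copies of
`A ⧸ J`. -/
lemma hasProjectiveDimensionLE_quotient_sup {A : Type} [CommRing A] (J : Ideal A) (x : A)
    (hx : ∀ p, x * p ∈ J → p ∈ J) {n : ℕ}
    (hJ : HasProjectiveDimensionLE (ModuleCat.of A (A ⧸ J)) n) :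
    HasProjectiveDimensionLE (ModuleCat.of A (A ⧸ (Ideal.span {x} ⊔ J))) (n + 1) := by
  let f : (A ⧸ J) →ₗ[A] (A ⧸ J) := LinearMap.lsmul A (A ⧸ J) x
  let g : (A ⧸ J) →ₗ[A] (A ⧸ (Ideal.span {x} ⊔ J)) :=
    Submodule.mapQ J _ LinearMap.id (fun p hp => Submodule.mem_sup_right hp)
  have hfg : Function.Exact f g := by
    intro y
    obtain ⟨y, rfl⟩ := Submodule.Quotient.mk_surjective _ y
    change Submodule.Quotient.mk y = 0 ↔ _
    rw [Submodule.Quotient.mk_eq_zero]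
    constructor
    · intro h
      obtain ⟨a, ha, b, hb, rfl⟩ := Submodule.mem_sup.1 h
      obtain ⟨c, rfl⟩ := Ideal.mem_span_singleton'.1 ha
      refine ⟨Submodule.Quotient.mk c, ?_⟩
      change Submodule.Quotient.mk (x * c) = _
      rw [Submodule.Quotient.eq]
      have : x * c - (c * x + b) = -b := by ring
      rw [this]
      exact J.neg_mem hb
    · rintro ⟨c, hc⟩
      obtain ⟨c, rfl⟩ := Submodule.Quotient.mk_surjective _ c
      change Submodule.Quotient.mk (x * c) = _ at hc
      rw [Submodule.Quotient.eq] at hc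
      have : y = x * c - (x * c - y) := by ring
      rw [this]
      exact Submodule.sub_mem _
        (Submodule.mem_sup_left (Ideal.mul_mem_right _ _ (Ideal.mem_span_singleton_self x)))
        (Submodule.mem_sup_right hc)
  have hf : Function.Injective f := by
    rw [injective_iff_map_eq_zero]
    intro y hy
    obtain ⟨y, rfl⟩ := Submodule.Quotient.mk_surjective _ y
    change Submodule.Quotient.mk (x * y) = _ at hy
    rw [Submodule.Quotient.mk_eq_zero] at hy ⊢
    exact hx y hy
  have hg : Function.Surjective g := by
    intro y
    obtain ⟨y, rfl⟩ := Submodule.Quotient.mk_surjective _ y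
    exact ⟨Submodule.Quotient.mk y, rfl⟩
  let S := ModuleCat.shortComplexOfCompEqZero f g hfg.linearMap_comp_eq_zero
  have hS : S.ShortExact :=
    { exact := ModuleCat.shortComplex_exact _ hfg
      mono_f := (ModuleCat.mono_iff_injective _).2 hf
      epi_g := (ModuleCat.epi_iff_surjective _).2 hg }
  exact hS.hasProjectiveDimensionLT_X₃ (n + 1) hJ
    (hasProjectiveDimensionLT_of_ge _ (n + 1) _ (by omega))

lemma hasProjectiveDimensionLE_quotient_span_X {σ k : Type} [Field k] (t : Finset σ) :
    HasProjectiveDimensionLE (ModuleCat.of (MvPolynomial σ k)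
      (MvPolynomial σ k ⧸ Ideal.span (X '' (t : Set σ) : Set (MvPolynomial σ k)))) t.card := by
  classical
  induction t using Finset.induction_on with
  | empty =>
    rw [Finset.card_empty, ← projective_iff_hasProjectiveDimensionLE_zero,
      ← IsProjective.iff_projective]
    refine Module.Projective.of_equiv (Submodule.quotEquivOfEqBot _ ?_).symm
    simp
  | insert a t ha ih =>
    rw [Finset.card_insert_of_notMem ha, Finset.coe_insert, Set.image_insert_eq,
      Ideal.span_insert]
    exact hasProjectiveDimensionLE_quotient_sup _ _ (fun p => mem_span_X_of_X_mul_mem ha) ih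

lemma hasProjectiveDimensionLE_resField (k : Type) [Field k] (n : ℕ) :
    HasProjectiveDimensionLE (ModuleCat.of (MvPolynomial (Fin n) k) (ResField k)) n := by
  let c : MvPolynomial (Fin n) k →ₗ[MvPolynomial (Fin n) k] ResField k :=
    { toFun := fun p => (constantCoeff p : k)
      map_add' := fun p q => map_add constantCoeff p q
      map_smul' := fun p q => map_mul constantCoeff p q }
  have hc : Function.Surjective c := fun y => ⟨C (show k from y), constantCoeff_C _ (show k from y)⟩
  have hker : Ideal.span (X '' ((Finset.univ : Finset (Fin n)) : Set (Fin n)) :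
      Set (MvPolynomial (Fin n) k)) = LinearMap.ker c := by
    ext p
    rw [mem_ideal_span_X_image, LinearMap.mem_ker]
    change _ ↔ constantCoeff p = 0
    rw [constantCoeff_eq, ← notMem_support_iff]
    constructor
    · intro h h0
      obtain ⟨i, -, hi⟩ := h 0 h0
      exact hi rfl
    · intro h m hm
      have hm0 : m ≠ 0 := fun h0 => h (h0 ▸ hm)
      obtain ⟨i, hi⟩ := Finsupp.ne_iff.1 hm0
      exact ⟨i, by simp, hi⟩
  have := hasProjectiveDimensionLE_quotient_span_X (k := k) (Finset.univ : Finset (Fin n))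
  rw [Finset.card_univ, Fintype.card_fin] at this
  exact hasProjectiveDimensionLT_of_iso
    ((Submodule.quotEquivOfEq _ _ hker).trans (c.quotKerEquivOfSurjective hc)).toModuleIso _

end TorVanishing

/-- For every module `M` over `Aₙ = k[x_1,…,x_n]` and every `i > n`,
`Tor_i^{Aₙ}(M, k) = 0`, where the variables act as zero on `k`.
(Hence the multisets `ξ_i(M)` of degrees of generators of these Tor modules
are empty for `i > n`.) -/
theorem tor_isZero_of_gt (k : Type) [Field k] (n : ℕ) (hn : 1 ≤ n)
    (M : Type) [AddCommGroup M] [Module (MvPolynomial (Fin n) k) M]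
    (i : ℕ) (hi : n < i) :
    Limits.IsZero (((Tor (ModuleCat (MvPolynomial (Fin n) k)) i).obj
        (ModuleCat.of (MvPolynomial (Fin n) k) M)).obj
        (ModuleCat.of (MvPolynomial (Fin n) k) (ResField k))) := by
  exact TorVanishing.isZero_leftDerived_of_hasProjectiveDimensionLE _
    (TorVanishing.hasProjectiveDimensionLE_resField k n) i hi
end
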